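/- arXiv:1108.5575 — 3 statements merged into one kernel-verified Lean document; each statement's English description precedes it below -/
import Mathlib

section
/- Let ξ ∈ [0,1] be the prior probability of non-relevance, and let q, p ∈ [0,1] be the probabilities that the binary symbol 1 is emitted under non-relevance and under relevance, respectively. Then the vector (Helstrom) probability of error is at most the classical Bayes probability of error: (1/2)·(1 − √(1 − 4ξ(1−ξ)X)) ≤ min(ξq, (1−ξ)p) + min(ξ(1−q), (1−ξ)(1−p)), where X = (√(p·q) + √((1−p)(1−q)))². (In particular 1 − 4ξ(1−ξ)X ≥ 0, so the square root is well defined.) -/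
/-! Let `a i = ξ q i` and `b i = (1 - ξ) p i` be the joint probabilities of the symbol `i` and each
of the two states, and let `P = ∑ min (a i) (b i)` be the Bayes error. The maxima sum to `1 - P`,
and `a i * b i` is the product of the minimum and the maximum, so Cauchy–Schwarz bounds
`(∑ √(a i * b i))² = ξ (1 - ξ) X` by `P (1 - P)`. Hence `(1 - 2 P)² ≤ 1 - 4 ξ (1 - ξ) X`. -/

section FiniteAlphabet

variable {ι : Type*} [Fintype ι]

/-- The Bhattacharyya coefficient of two nonnegative weights on a finite alphabet. The weights need
not be normalized, so that it also applies to joint probabilities; its square at two probability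
vectors is the fidelity `X`. -/
noncomputable def bhattacharyyaCoeff (a b : ι → ℝ) : ℝ :=
  ∑ i, √(a i * b i)

/-- The error probability of the Bayes-optimal decision between two hypotheses. The weights `a` and
`b` are joint probabilities (prior times likelihood): on observing `i` one decides for the
hypothesis of larger weight, and the smaller weight is the contribution of `i` to the error. -/
noncomputable def bayesError (a b : ι → ℝ) : ℝ :=
  ∑ i, min (a i) (b i)

theorem bhattacharyyaCoeff_comm (a b : ι → ℝ) :
    bhattacharyyaCoeff a b = bhattacharyyaCoeff b a := by
  simp only [bhattacharyyaCoeff, mul_comm]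

theorem bhattacharyyaCoeff_smul_smul {c d : ℝ} (hcd : 0 ≤ c * d) (a b : ι → ℝ) :
    bhattacharyyaCoeff (c • a) (d • b) = √(c * d) * bhattacharyyaCoeff a b := by
  simp only [bhattacharyyaCoeff, Pi.smul_apply, smul_eq_mul, mul_mul_mul_comm c,
    Real.sqrt_mul hcd, Finset.mul_sum]

theorem bayesError_add_sum_max (a b : ι → ℝ) :
    bayesError a b + ∑ i, max (a i) (b i) = ∑ i, a i + ∑ i, b i := by
  simp only [bayesError, ← Finset.sum_add_distrib, min_add_max]

theorem bhattacharyyaCoeff_sq_le_bayesError_mul_sum_max {a b : ι → ℝ} (ha : 0 ≤ a) (hb : 0 ≤ b) :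
    bhattacharyyaCoeff a b ^ 2 ≤ bayesError a b * ∑ i, max (a i) (b i) :=
  Finset.sum_sq_le_sum_mul_sum_of_sq_le_mul _ (fun i _ ↦ le_min (ha i) (hb i))
    (fun i _ ↦ le_max_of_le_left (ha i))
    fun i _ ↦ by rw [Real.sq_sqrt (mul_nonneg (ha i) (hb i)), min_mul_max]

theorem sq_sum_add_sum_sub_two_mul_bayesError_le {a b : ι → ℝ} (ha : 0 ≤ a) (hb : 0 ≤ b) :
    (∑ i, a i + ∑ i, b i - 2 * bayesError a b) ^ 2 ≤
      (∑ i, a i + ∑ i, b i) ^ 2 - 4 * bhattacharyyaCoeff a b ^ 2 := by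
  have cauchy_schwarz := bhattacharyyaCoeff_sq_le_bayesError_mul_sum_max ha hb
  rw [← bayesError_add_sum_max]
  linear_combination 4 * cauchy_schwarz

theorem helstrom_le_bayes_binary_general {ξ : ℝ} {q p : ι → ℝ} (hξ : ξ ∈ Set.Icc (0 : ℝ) 1)
    (hq : q ∈ stdSimplex ℝ ι) (hp : p ∈ stdSimplex ℝ ι) :
    0 ≤ 1 - 4 * ξ * (1 - ξ) * bhattacharyyaCoeff p q ^ 2 ∧
      1 / 2 * (1 - √(1 - 4 * ξ * (1 - ξ) * bhattacharyyaCoeff p q ^ 2)) ≤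
        bayesError (ξ • q) ((1 - ξ) • p) := by
  have hξ' : 0 ≤ 1 - ξ := sub_nonneg.2 hξ.2
  have hprior : 0 ≤ ξ * (1 - ξ) := mul_nonneg hξ.1 hξ'
  have total_mass : ∑ i, (ξ • q) i + ∑ i, ((1 - ξ) • p) i = 1 := by
    simp only [Pi.smul_apply, smul_eq_mul, ← Finset.mul_sum, hq.2, hp.2]
    ring
  have fidelity : bhattacharyyaCoeff (ξ • q) ((1 - ξ) • p) ^ 2 =
      ξ * (1 - ξ) * bhattacharyyaCoeff p q ^ 2 := by
    rw [bhattacharyyaCoeff_smul_smul hprior, mul_pow, Real.sq_sqrt hprior, bhattacharyyaCoeff_comm]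
  have bound : (1 - 2 * bayesError (ξ • q) ((1 - ξ) • p)) ^ 2 ≤
      1 - 4 * ξ * (1 - ξ) * bhattacharyyaCoeff p q ^ 2 := by
    have h := sq_sum_add_sum_sub_two_mul_bayesError_le (smul_nonneg hξ.1 hq.1)
      (smul_nonneg hξ' hp.1)
    rw [total_mass, fidelity] at h
    linear_combination h
  exact ⟨(sq_nonneg _).trans bound, by linarith [Real.le_sqrt_of_sq_le bound]⟩

end FiniteAlphabet

theorem vec_one_sub_mem_stdSimplex {x : ℝ} (hx : x ∈ Set.Icc (0 : ℝ) 1) :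
    ![x, 1 - x] ∈ stdSimplex ℝ (Fin 2) := by
  simpa [stdSimplex, Fin.forall_fin_two] using hx

/-- Binary case: the Helstrom (vector) probability of error is at most the
classical Bayes probability of error. -/
theorem helstrom_le_bayes_binary (ξ q p : ℝ)
    (hξ : ξ ∈ Set.Icc (0:ℝ) 1) (hq : q ∈ Set.Icc (0:ℝ) 1) (hp : p ∈ Set.Icc (0:ℝ) 1) :
    1 - 4 * ξ * (1 - ξ) * (Real.sqrt (p * q) + Real.sqrt ((1 - p) * (1 - q)))^2 ≥ 0 ∧
    (1/2) * (1 - Real.sqrt (1 - 4 * ξ * (1 - ξ) *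
        (Real.sqrt (p * q) + Real.sqrt ((1 - p) * (1 - q)))^2)) ≤
      min (ξ * q) ((1 - ξ) * p) + min (ξ * (1 - q)) ((1 - ξ) * (1 - p)) := by
  simpa [bhattacharyyaCoeff, bayesError] using
    helstrom_le_bayes_binary_general hξ (vec_one_sub_mem_stdSimplex hq)
      (vec_one_sub_mem_stdSimplex hp)
end

section
/- Let n ≥ 1, let p₀, p₁ : Fin n → ℝ be probability distributions (nonnegative entries summing to 1), and let ξ ∈ [0,1]. Then (∑ₓ |ξ·p₀(x) − (1−ξ)·p₁(x)|)² + 4ξ(1−ξ)·(∑ₓ √(p₀(x)·p₁(x)))² ≤ 1. -/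
/-!
With `F = ∑ √(ab)` and `S = ∑ (a + b)`, the factorization
`(a - b)² = (a + b - 2√(ab)) (a + b + 2√(ab))` has nonnegative factors by AM-GM, so Cauchy–Schwarz
gives `(∑ |a - b|)² ≤ (S - 2F) (S + 2F) = S² - 4F²`. Take `a = ξ p₀` and `b = (1 - ξ) p₁`, for
which `S = 1`.
-/

theorem two_mul_sqrt_mul_le_add {a b : ℝ} (ha : 0 ≤ a) (hb : 0 ≤ b) : 2 * √(a * b) ≤ a + b :=
  two_mul_le_add_of_sq_le_mul ha hb (Real.sq_sqrt (mul_nonneg ha hb)).le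

theorem sq_sub_eq_sub_sqrt_mul_add_sqrt {a b : ℝ} (hab : 0 ≤ a * b) :
    (a - b) ^ 2 = (a + b - 2 * √(a * b)) * (a + b + 2 * √(a * b)) := by
  linear_combination 4 * Real.sq_sqrt hab

section

open Finset

variable {ι : Type*} (s : Finset ι)

theorem sq_sum_abs_sub_le_sub_sqrt_mul_add_sqrt {a b : ι → ℝ}
    (ha : ∀ i ∈ s, 0 ≤ a i) (hb : ∀ i ∈ s, 0 ≤ b i) :
    (∑ i ∈ s, |a i - b i|) ^ 2 ≤
      (∑ i ∈ s, (a i + b i) - 2 * ∑ i ∈ s, √(a i * b i)) *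
        (∑ i ∈ s, (a i + b i) + 2 * ∑ i ∈ s, √(a i * b i)) := by
  rw [mul_sum, ← sum_sub_distrib, ← sum_add_distrib]
  refine sum_sq_le_sum_mul_sum_of_sq_le_mul s (fun i hi ↦ ?_) (fun i hi ↦ ?_) (fun i hi ↦ ?_)
  · exact sub_nonneg.2 (two_mul_sqrt_mul_le_add (ha i hi) (hb i hi))
  · exact add_nonneg (add_nonneg (ha i hi) (hb i hi)) (by positivity)
  · rw [sq_abs]
    exact (sq_sub_eq_sub_sqrt_mul_add_sqrt (mul_nonneg (ha i hi) (hb i hi))).le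

theorem sq_sum_abs_sub_add_four_mul_sq_sum_sqrt_mul_le {a b : ι → ℝ}
    (ha : ∀ i ∈ s, 0 ≤ a i) (hb : ∀ i ∈ s, 0 ≤ b i) :
    (∑ i ∈ s, |a i - b i|) ^ 2 + 4 * (∑ i ∈ s, √(a i * b i)) ^ 2 ≤
      (∑ i ∈ s, (a i + b i)) ^ 2 := by
  linarith [sq_sum_abs_sub_le_sub_sqrt_mul_add_sqrt s ha hb]

theorem sq_sum_sqrt_mul_mul_mul {v w : ℝ} (hvw : 0 ≤ v * w) (p q : ι → ℝ) :
    (∑ i ∈ s, √(v * p i * (w * q i))) ^ 2 = v * w * (∑ i ∈ s, √(p i * q i)) ^ 2 := by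
  simp only [mul_mul_mul_comm v, Real.sqrt_mul hvw, ← mul_sum, mul_pow, Real.sq_sqrt hvw]

theorem tv_sq_add_fidelity_le_one_general {p q : ι → ℝ} (hp : ∀ i ∈ s, 0 ≤ p i)
    (hq : ∀ i ∈ s, 0 ≤ q i) {v w : ℝ} (hv : 0 ≤ v) (hw : 0 ≤ w) :
    (∑ i ∈ s, |v * p i - w * q i|) ^ 2 + 4 * v * w * (∑ i ∈ s, √(p i * q i)) ^ 2 ≤
      (v * ∑ i ∈ s, p i + w * ∑ i ∈ s, q i) ^ 2 :=
  calc (∑ i ∈ s, |v * p i - w * q i|) ^ 2 + 4 * v * w * (∑ i ∈ s, √(p i * q i)) ^ 2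
    _ = (∑ i ∈ s, |v * p i - w * q i|) ^ 2 + 4 * (∑ i ∈ s, √(v * p i * (w * q i))) ^ 2 := by
      rw [sq_sum_sqrt_mul_mul_mul s (mul_nonneg hv hw)]
      ring
    _ ≤ (∑ i ∈ s, (v * p i + w * q i)) ^ 2 :=
      sq_sum_abs_sub_add_four_mul_sq_sum_sqrt_mul_le s
        (fun i hi ↦ mul_nonneg hv (hp i hi)) (fun i hi ↦ mul_nonneg hw (hq i hi))
    _ = (v * ∑ i ∈ s, p i + w * ∑ i ∈ s, q i) ^ 2 := by
      rw [sum_add_distrib, mul_sum, mul_sum]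

end

open Finset in
/-- Key inequality relating the weighted total variation distance and the
Bhattacharyya (fidelity) coefficient. -/
theorem tv_sq_add_fidelity_le_one (n : ℕ) (hn : 1 ≤ n) (p₀ p₁ : Fin n → ℝ)
    (h₀ : ∀ x, 0 ≤ p₀ x) (h₁ : ∀ x, 0 ≤ p₁ x)
    (hs₀ : ∑ x, p₀ x = 1) (hs₁ : ∑ x, p₁ x = 1)
    (ξ : ℝ) (hξ : ξ ∈ Set.Icc (0:ℝ) 1) :
    (∑ x, |ξ * p₀ x - (1 - ξ) * p₁ x|)^2 +
      4 * ξ * (1 - ξ) * (∑ x, Real.sqrt (p₀ x * p₁ x))^2 ≤ 1 := by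
  simpa [hs₀, hs₁] using tv_sq_add_fidelity_le_one_general univ (fun x _ ↦ h₀ x) (fun x _ ↦ h₁ x)
    hξ.1 (sub_nonneg.2 hξ.2)
end

section
/- Let ξ ∈ [0,1] and c ∈ ℝ. Then the minimum over η ∈ ℝ of the function f(η) = ξ·sin²η + (1−ξ)·sin²(c−η) exists and equals (1/2)·(1 − √(ξ² + (1−ξ)² + 2ξ(1−ξ)·cos(2c))), which equals (1/2)·(1 − √(1 − 4ξ(1−ξ)·sin²c)). -/
/-! Doubling the angle turns `p sin² η + q sin² (c - η)` into
`(p + q - (p cos 2η + q cos (2c - 2η))) / 2`. The subtracted term is a sinusoid in `2η`, so it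
attains its amplitude as maximum; the amplitude is `‖p + q e^{2ic}‖`, which the law of cosines
evaluates. -/

section

open Real Set

theorem mul_cos_add_mul_sin_eq_sqrt_mul_cos_sub_arg (a b θ : ℝ) :
    a * cos θ + b * sin θ = √(a ^ 2 + b ^ 2) * cos (θ - Complex.arg ⟨a, b⟩) := by
  have hcos := Complex.norm_mul_cos_arg ⟨a, b⟩
  have hsin := Complex.norm_mul_sin_arg ⟨a, b⟩
  rw [Complex.norm_eq_sqrt_sq_add_sq] at hcos hsin
  rw [cos_sub]
  linear_combination -cos θ * hcos - sin θ * hsin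

theorem isGreatest_range_mul_cos_add_mul_sin (a b : ℝ) :
    IsGreatest (range fun θ => a * cos θ + b * sin θ) √(a ^ 2 + b ^ 2) := by
  simp only [mul_cos_add_mul_sin_eq_sqrt_mul_cos_sub_arg]
  refine ⟨⟨Complex.arg ⟨a, b⟩, by simp only [sub_self, cos_zero, mul_one]⟩, ?_⟩
  rintro _ ⟨θ, rfl⟩
  exact mul_le_of_le_one_right (sqrt_nonneg _) (cos_le_one _)

theorem isGreatest_range_mul_cos_add_mul_cos_sub (p q φ : ℝ) :
    IsGreatest (range fun θ => p * cos θ + q * cos (φ - θ))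
      √(p ^ 2 + q ^ 2 + 2 * p * q * cos φ) := by
  have hsinusoid (θ : ℝ) :
      p * cos θ + q * cos (φ - θ) = (p + q * cos φ) * cos θ + q * sin φ * sin θ := by
    rw [cos_sub]
    ring
  have hamplitude :
      p ^ 2 + q ^ 2 + 2 * p * q * cos φ = (p + q * cos φ) ^ 2 + (q * sin φ) ^ 2 := by
    linear_combination -q ^ 2 * sin_sq_add_cos_sq φ
  simpa only [hsinusoid, hamplitude] using
    isGreatest_range_mul_cos_add_mul_sin (p + q * cos φ) (q * sin φ)

theorem mul_sin_sq_add_mul_sin_sub_sq (p q c η : ℝ) :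
    p * sin η ^ 2 + q * sin (c - η) ^ 2 =
      (1 / 2) * (p + q - (p * cos (2 * η) + q * cos (2 * c - 2 * η))) := by
  rw [sin_sq_eq_half_sub, sin_sq_eq_half_sub, mul_sub 2]
  ring

theorem isLeast_range_mul_sin_sq_add_mul_sin_sub_sq (p q c : ℝ) :
    IsLeast (range fun η => p * sin η ^ 2 + q * sin (c - η) ^ 2)
      ((1 / 2) * (p + q - √(p ^ 2 + q ^ 2 + 2 * p * q * cos (2 * c)))) := by
  have hanti : Antitone fun x : ℝ => (1 / 2) * (p + q - x) := fun x y hxy => by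
    dsimp only
    linarith
  have hdouble : Function.Surjective fun η : ℝ => 2 * η := mul_left_surjective₀ two_ne_zero
  have hgreatest := isGreatest_range_mul_cos_add_mul_cos_sub p q (2 * c)
  rw [← hdouble.range_comp] at hgreatest
  simpa only [mul_sin_sq_add_mul_sin_sub_sq, ← range_comp, Function.comp_def] using
    hanti.map_isGreatest hgreatest

theorem sq_add_sq_add_two_mul_mul_cos_two_mul (p q c : ℝ) :
    p ^ 2 + q ^ 2 + 2 * p * q * cos (2 * c) = (p + q) ^ 2 - 4 * p * q * sin c ^ 2 := by
  rw [cos_two_mul, cos_sq']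
  ring

theorem min_error_angle_general (p q c : ℝ) :
    IsLeast (range fun η => p * sin η ^ 2 + q * sin (c - η) ^ 2)
      ((1 / 2) * (p + q - √(p ^ 2 + q ^ 2 + 2 * p * q * cos (2 * c)))) ∧
    (1 / 2) * (p + q - √(p ^ 2 + q ^ 2 + 2 * p * q * cos (2 * c))) =
      (1 / 2) * (p + q - √((p + q) ^ 2 - 4 * p * q * sin c ^ 2)) :=
  ⟨isLeast_range_mul_sin_sq_add_mul_sin_sub_sq p q c,
    by rw [sq_add_sq_add_two_mul_mul_cos_two_mul]⟩

end

/-- The minimum over `η` of `ξ·sin²η + (1−ξ)·sin²(c−η)` exists and equals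
`(1/2)(1 − √(ξ² + (1−ξ)² + 2ξ(1−ξ)cos(2c)))`, which equals
`(1/2)(1 − √(1 − 4ξ(1−ξ)sin²c))`. -/
theorem min_error_angle (ξ c : ℝ) (hξ : ξ ∈ Set.Icc (0:ℝ) 1) :
    IsLeast (Set.range fun η : ℝ => ξ * Real.sin η ^ 2 + (1 - ξ) * Real.sin (c - η) ^ 2)
      ((1/2) * (1 - Real.sqrt (ξ^2 + (1 - ξ)^2 + 2 * ξ * (1 - ξ) * Real.cos (2 * c)))) ∧
    (1/2) * (1 - Real.sqrt (ξ^2 + (1 - ξ)^2 + 2 * ξ * (1 - ξ) * Real.cos (2 * c))) =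
      (1/2) * (1 - Real.sqrt (1 - 4 * ξ * (1 - ξ) * Real.sin c ^ 2)) := by
  simpa only [add_sub_cancel, one_pow] using min_error_angle_general ξ (1 - ξ) c
end
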